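/- arXiv:1906.03851 — 7 statements merged into one kernel-verified Lean document; each statement's English description precedes it below -/
import Mathlib

section
/- (Proposition 2.1.) Let F be the logistic function, θ ∈ ℝ and δ_1,…,δ_k ∈ ℝ. Let μ be a probability measure on {0,1}^k concentrated on the Guttman space Ω^G whose coordinate marginals satisfy μ(Y^{(r)} = 1) = F(θ − δ_r) for all r = 1,…,k. Then necessarily F(θ − δ_r) ≥ F(θ − δ_s) whenever r < s (equivalently δ_r ≤ δ_s for r < s), and the sum Y = Y^{(1)} + … + Y^{(k)} follows the cumulative model: μ(Y ≥ r) = F(θ − δ_r) for all r = 1,…,k. Conversely, if F(θ − δ_r) ≥ F(θ − δ_s) for all r < s, then such a probability measure μ on Ω^G with these marginals exists. -/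
open scoped Classical

/-- The logistic function `F(x) = exp x / (1 + exp x)`. -/
noncomputable def logistic (x : ℝ) : ℝ := Real.exp x / (1 + Real.exp x)

/-- A vector in `{0,1}^k` is a Guttman vector if its coordinates are nonincreasing,
i.e. it has the form `(1,…,1,0,…,0)`. -/
def IsGuttman {k : ℕ} (y : Fin k → Bool) : Prop :=
  ∀ i j : Fin k, i ≤ j → y j = true → y i = true

/-- The sum `Y = Y⁽¹⁾ + … + Y⁽ᵏ⁾` of the binary coordinates. -/
def gsum {k : ℕ} (y : Fin k → Bool) : ℕ :=
  ∑ i : Fin k, if y i then 1 else 0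

lemma gsum_iff {k : ℕ} (y : Fin k → Bool) (hy : IsGuttman y) (i : Fin k) :
    (i : ℕ) + 1 ≤ gsum y ↔ y i = true := by
  have hc : gsum y = (Finset.univ.filter (fun j => y j = true)).card := by
    simp [gsum]
  rw [hc]
  constructor
  · intro h
    by_contra hn
    have hsub : Finset.univ.filter (fun j => y j = true) ⊆ Finset.Iio i := by
      intro j hj
      simp only [Finset.mem_filter, Finset.mem_univ, true_and] at hj
      rw [Finset.mem_Iio]
      by_contra hij
      exact hn (hy i j (not_lt.mp hij) hj)
    have := Finset.card_le_card hsub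
    rw [Fin.card_Iio] at this
    omega
  · intro h
    have hsub : Finset.Iic i ⊆ Finset.univ.filter (fun j => y j = true) := by
      intro j hj
      simp only [Finset.mem_filter, Finset.mem_univ, true_and]
      exact hy j i (Finset.mem_Iic.mp hj) h
    have := Finset.card_le_card hsub
    rwa [Fin.card_Iic] at this

lemma logistic_bounds (x : ℝ) : 0 ≤ logistic x ∧ logistic x ≤ 1 := by
  have := Real.exp_pos x
  unfold logistic
  constructor
  · positivity
  · rw [div_le_one (by positivity)]; linarith

lemma telescope_from (g : ℕ → ℝ) (a m : ℕ) (h : a ≤ m) :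
    ∑ n ∈ Finset.range m, (if a ≤ n then g n - g (n + 1) else 0) = g a - g m := by
  induction m, h using Nat.le_induction with
  | base =>
    rw [sub_self]
    apply Finset.sum_eq_zero
    intro n hn
    rw [Finset.mem_range] at hn
    rw [if_neg (by omega)]
  | succ m hm ih =>
    rw [Finset.sum_range_succ, ih, if_pos hm]; ring

/-- Proposition 2.1: if a probability measure `μ` on `{0,1}^k` is
concentrated on the Guttman space and its coordinate marginals are
`μ(Y⁽ʳ⁾ = 1) = F(θ - δ r)`, then necessarily `F(θ - δ r) ≥ F(θ - δ s)` for `r < s`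
and the sum `Y` follows the cumulative model `μ(Y ≥ r) = F(θ - δ r)`.
Conversely, if `F(θ - δ r) ≥ F(θ - δ s)` for all `r < s`, such a `μ` exists.
(Here `r = i + 1` for `i : Fin k`.) -/
theorem cumulative_model_iff_guttman_marginals
    (k : ℕ) (θ : ℝ) (δ : Fin k → ℝ) :
    (∀ μ : (Fin k → Bool) → ℝ,
      (∀ y, 0 ≤ μ y) → (∑ y, μ y = 1) →
      (∀ y, ¬ IsGuttman y → μ y = 0) →
      (∀ i : Fin k,
        ∑ y ∈ Finset.univ.filter (fun y : Fin k → Bool => y i = true), μ y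
          = logistic (θ - δ i)) →
      ((∀ i j : Fin k, i < j → logistic (θ - δ j) ≤ logistic (θ - δ i)) ∧
        (∀ i : Fin k,
          ∑ y ∈ Finset.univ.filter (fun y : Fin k → Bool => (i : ℕ) + 1 ≤ gsum y), μ y
            = logistic (θ - δ i)))) ∧
    ((∀ i j : Fin k, i < j → logistic (θ - δ j) ≤ logistic (θ - δ i)) →
      ∃ μ : (Fin k → Bool) → ℝ,
        (∀ y, 0 ≤ μ y) ∧ (∑ y, μ y = 1) ∧
        (∀ y, ¬ IsGuttman y → μ y = 0) ∧
        (∀ i : Fin k,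
          ∑ y ∈ Finset.univ.filter (fun y : Fin k → Bool => y i = true), μ y
            = logistic (θ - δ i))) := by
  constructor
  · intro μ h0 _ hG hm
    constructor
    · intro i j hij
      rw [← hm i, ← hm j, Finset.sum_filter, Finset.sum_filter]
      apply Finset.sum_le_sum
      intro y _
      by_cases hy : IsGuttman y
      · by_cases hj : y j = true
        · rw [if_pos hj, if_pos (hy i j hij.le hj)]
        · rw [if_neg hj]
          split_ifs
          · exact h0 y
          · exact le_rfl
      · simp [hG y hy]
    · intro i
      rw [← hm i, Finset.sum_filter, Finset.sum_filter]
      apply Finset.sum_congr rfl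
      intro y _
      by_cases hy : IsGuttman y
      · simp only [gsum_iff y hy i]
      · simp [hG y hy]
  · intro hmono
    obtain ⟨g, hg0, hg1, hgk⟩ : ∃ g : ℕ → ℝ, g 0 = 1 ∧
        (∀ i : Fin k, g (i + 1) = logistic (θ - δ i)) ∧ g (k + 1) = 0 := by
      refine ⟨fun n => if n = 0 then 1 else
        if h : n - 1 < k then logistic (θ - δ ⟨n - 1, h⟩) else 0, ?_, ?_, ?_⟩ <;> simp
    have hanti : ∀ n ∈ Finset.range (k + 1), 0 ≤ g n - g (n + 1) := by
      intro n hn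
      rw [Finset.mem_range] at hn
      rw [sub_nonneg]
      rcases Nat.eq_zero_or_pos n with rfl | hpos
      · rcases Nat.eq_zero_or_pos k with rfl | hk
        · rw [hgk, hg0]; exact zero_le_one
        · rw [hg0, hg1 ⟨0, hk⟩]; exact (logistic_bounds _).2
      · obtain ⟨m, rfl⟩ : ∃ m, n = m + 1 := ⟨n - 1, by omega⟩
        rw [hg1 ⟨m, by omega⟩]
        rcases Nat.lt_or_ge (m + 1) k with h | h
        · rw [hg1 ⟨m + 1, h⟩]
          exact hmono _ _ (by simp [Fin.lt_def])
        · have : m + 1 = k := by omega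
          rw [this, hgk]; exact (logistic_bounds _).1
    refine ⟨fun y => ∑ n ∈ Finset.range (k + 1),
      if (fun i : Fin k => decide ((i : ℕ) < n)) = y then g n - g (n + 1) else 0, ?_, ?_, ?_, ?_⟩
    · intro y
      apply Finset.sum_nonneg
      intro n hn
      split_ifs
      · exact hanti n hn
      · exact le_rfl
    · rw [Finset.sum_comm]
      have := telescope_from g 0 (k + 1) (by omega)
      rw [hg0, hgk] at this
      simpa using this
    · intro y hy
      apply Finset.sum_eq_zero
      intro n _
      rw [if_neg]
      rintro rfl
      apply hy
      intro i j hij hj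
      simp only [decide_eq_true_eq] at hj ⊢
      exact lt_of_le_of_lt hij hj
    · intro i
      rw [Finset.sum_comm]
      have := telescope_from g (i + 1) (k + 1) (by omega)
      rw [hg1, hgk, sub_zero] at this
      rw [← this]
      apply Finset.sum_congr rfl
      intro n _
      rw [Finset.sum_ite_eq]
      simp
end

section
/- (Proposition 3.1.) Let F be the logistic function, θ ∈ ℝ, δ_1,…,δ_k ∈ ℝ. Let μ be a probability measure on {0,1}^k concentrated on the Guttman space Ω^G whose coordinate projections Y^{(1)},…,Y^{(k)} satisfy the conditional Rasch models μ(Y^{(r)} = 1 ∧ Y^{(r−1)} = 1) = F(θ − δ_r) · μ(Y^{(r−1)} = 1) for all r = 1,…,k, with the convention that Y^{(0)} ≡ 1. Then the sum Y = Y^{(1)} + … + Y^{(k)} follows the sequential model, and explicitly μ(Y = 0) = 1 − F(θ − δ_1), μ(Y = r) = (1 − F(θ − δ_{r+1})) ∏_{j=1}^r F(θ − δ_j) for 1 ≤ r ≤ k−1, and μ(Y = k) = ∏_{j=1}^k F(θ − δ_j). -/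
open scoped Classical

/-- The `r`-th coordinate `Y⁽ʳ⁾` of `y ∈ {0,1}^k` (for `1 ≤ r ≤ k`), with the
conventions `Y⁽⁰⁾ ≡ 1` and `Y⁽ʳ⁾ ≡ 0` for `r > k`. -/
def coordExt {k : ℕ} (y : Fin k → Bool) (r : ℕ) : Bool :=
  if h0 : r = 0 then true
  else if h : r ≤ k then y ⟨r - 1, by omega⟩ else false

theorem guttman_le_gsum_iff {k : ℕ} (y : Fin k → Bool) (hy : IsGuttman y) (r : ℕ) (hr : r ≤ k) :
    r ≤ gsum y ↔ coordExt y r = true := by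
  have hg : gsum y = (Finset.univ.filter (fun i : Fin k => y i = true)).card := by
    simp [gsum]
  rcases Nat.eq_zero_or_pos r with h0 | h0
  · subst h0
    simp [coordExt]
  have hc : coordExt y r = y ⟨r - 1, by omega⟩ := by
    unfold coordExt
    rw [dif_neg (by omega), dif_pos hr]
  rw [hc, hg]
  constructor
  · intro h
    by_contra hn
    have hsub : Finset.univ.filter (fun i : Fin k => y i = true)
        ⊆ Finset.Iio (⟨r - 1, by omega⟩ : Fin k) := by
      intro i hi
      rw [Finset.mem_Iio]
      by_contra hlt
      exact hn (hy _ i (not_lt.mp hlt) (by simpa using hi))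
    have := Finset.card_le_card hsub
    rw [Fin.card_Iio] at this
    simp only at this
    omega
  · intro h
    have hsub : Finset.Iic (⟨r - 1, by omega⟩ : Fin k)
        ⊆ Finset.univ.filter (fun i : Fin k => y i = true) := by
      intro i hi
      rw [Finset.mem_Iic] at hi
      simpa using hy i _ hi h
    have := Finset.card_le_card hsub
    rw [Fin.card_Iic] at this
    simp only at this
    omega

theorem gsum_le_size {k : ℕ} (y : Fin k → Bool) : gsum y ≤ k := by
  have hg : gsum y = (Finset.univ.filter (fun i : Fin k => y i = true)).card := by
    simp [gsum]
  rw [hg]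
  simpa using Finset.card_le_univ (Finset.univ.filter (fun i : Fin k => y i = true))

theorem guttman_sum_filter_congr {k : ℕ} (μ : (Fin k → Bool) → ℝ)
    (hconc : ∀ y, ¬ IsGuttman y → μ y = 0) (p q : (Fin k → Bool) → Prop)
    [DecidablePred p] [DecidablePred q] (h : ∀ y, IsGuttman y → (p y ↔ q y)) :
    ∑ y ∈ Finset.univ.filter p, μ y = ∑ y ∈ Finset.univ.filter q, μ y := by
  rw [Finset.sum_filter, Finset.sum_filter]
  refine Finset.sum_congr rfl fun y _ => ?_
  by_cases hy : IsGuttman y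
  · simp only [h y hy]
  · simp [hconc y hy]

/-- Proposition 3.1: if a probability measure `μ` on `{0,1}^k` is
concentrated on the Guttman space and its coordinates satisfy the conditional Rasch
models `μ(Y⁽ʳ⁾ = 1 ∧ Y⁽ʳ⁻¹⁾ = 1) = F(θ - δ r) · μ(Y⁽ʳ⁻¹⁾ = 1)` for `r = 1,…,k`
(with `Y⁽⁰⁾ ≡ 1`), then the sum `Y` follows the sequential model, with the explicit
probabilities `μ(Y = 0) = 1 - F(θ - δ 1)`,
`μ(Y = r) = (1 - F(θ - δ (r+1))) ∏_{j=1}^r F(θ - δ j)` for `1 ≤ r ≤ k - 1`, and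
`μ(Y = k) = ∏_{j=1}^k F(θ - δ j)`. -/
theorem sequential_model_from_guttman_conditional_rasch
    (k : ℕ) (hk : 1 ≤ k) (θ : ℝ) (δ : ℕ → ℝ)
    (μ : (Fin k → Bool) → ℝ)
    (hnn : ∀ y, 0 ≤ μ y) (hsum : ∑ y, μ y = 1)
    (hconc : ∀ y, ¬ IsGuttman y → μ y = 0)
    (hrasch : ∀ r ∈ Finset.Icc 1 k,
      (∑ y ∈ Finset.univ.filter
          (fun y : Fin k → Bool => coordExt y r = true ∧ coordExt y (r - 1) = true), μ y)
        = logistic (θ - δ r) *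
          ∑ y ∈ Finset.univ.filter
            (fun y : Fin k → Bool => coordExt y (r - 1) = true), μ y) :
    (∀ r ∈ Finset.Icc 1 k,
      (∑ y ∈ Finset.univ.filter (fun y : Fin k → Bool => r ≤ gsum y), μ y)
        = logistic (θ - δ r) *
          ∑ y ∈ Finset.univ.filter (fun y : Fin k → Bool => r - 1 ≤ gsum y), μ y) ∧
    (∑ y ∈ Finset.univ.filter (fun y : Fin k → Bool => gsum y = 0), μ y)
      = 1 - logistic (θ - δ 1) ∧
    (∀ r, 1 ≤ r → r ≤ k - 1 →
      (∑ y ∈ Finset.univ.filter (fun y : Fin k → Bool => gsum y = r), μ y)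
        = (1 - logistic (θ - δ (r + 1))) * ∏ j ∈ Finset.Icc 1 r, logistic (θ - δ j)) ∧
    (∑ y ∈ Finset.univ.filter (fun y : Fin k → Bool => gsum y = k), μ y)
      = ∏ j ∈ Finset.Icc 1 k, logistic (θ - δ j) := by
  have hseq : ∀ r ∈ Finset.Icc 1 k,
      (∑ y ∈ Finset.univ.filter (fun y : Fin k → Bool => r ≤ gsum y), μ y)
        = logistic (θ - δ r) *
          ∑ y ∈ Finset.univ.filter (fun y : Fin k → Bool => r - 1 ≤ gsum y), μ y := by
    intro r hr
    have hr' := Finset.mem_Icc.mp hr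
    have h1 := hrasch r hr
    rw [guttman_sum_filter_congr μ hconc _ (fun y : Fin k → Bool => r ≤ gsum y) (by
        intro y hy
        rw [← guttman_le_gsum_iff y hy r hr'.2, ← guttman_le_gsum_iff y hy (r - 1) (by omega)]
        omega),
      guttman_sum_filter_congr μ hconc (fun y : Fin k → Bool => coordExt y (r - 1) = true)
        (fun y : Fin k → Bool => r - 1 ≤ gsum y) (by
        intro y hy
        rw [← guttman_le_gsum_iff y hy (r - 1) (by omega)])] at h1
    exact h1
  have hT : ∀ r, r ≤ k →
      (∑ y ∈ Finset.univ.filter (fun y : Fin k → Bool => r ≤ gsum y), μ y)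
        = ∏ j ∈ Finset.Icc 1 r, logistic (θ - δ j) := by
    intro r
    induction r with
    | zero => intro _; simpa using hsum
    | succ n ih =>
      intro hn
      rw [hseq (n + 1) (Finset.mem_Icc.mpr ⟨by omega, hn⟩), Finset.prod_Icc_succ_top (by omega)]
      simp only [Nat.add_sub_cancel]
      rw [ih (by omega), mul_comm]
  have hD : ∀ r,
      (∑ y ∈ Finset.univ.filter (fun y : Fin k → Bool => gsum y = r), μ y)
        = (∑ y ∈ Finset.univ.filter (fun y : Fin k → Bool => r ≤ gsum y), μ y)
          - ∑ y ∈ Finset.univ.filter (fun y : Fin k → Bool => r + 1 ≤ gsum y), μ y := by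
    intro r
    rw [Finset.sum_filter, Finset.sum_filter, Finset.sum_filter, ← Finset.sum_sub_distrib]
    refine Finset.sum_congr rfl fun y _ => ?_
    rcases lt_trichotomy (gsum y) r with h | h | h
    · rw [if_neg (by omega), if_neg (by omega), if_neg (by omega)]; simp
    · rw [if_pos (by omega), if_pos (by omega), if_neg (by omega)]; simp
    · rw [if_neg (by omega), if_pos (by omega), if_pos (by omega)]; simp
  refine ⟨hseq, ?_, ?_, ?_⟩
  · rw [hD 0, hT 0 (by omega), hT (0 + 1) (by omega)]
    simp
  · intro r h1 h2
    rw [hD r, hT r (by omega), hT (r + 1) (by omega), Finset.prod_Icc_succ_top (by omega)]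
    ring
  · rw [← hT k le_rfl]
    refine guttman_sum_filter_congr μ hconc _ _ fun y _ => ?_
    have := gsum_le_size y
    omega
end

section
/- (Proposition 4.2.) Let k = 2, let F be the logistic function, θ, δ_1, δ_2 ∈ ℝ. Let μ̃ be the product measure on {0,1}² with independent Bernoulli coordinates of success probabilities F(θ − δ_1) and F(θ − δ_2), and let μ be μ̃ conditioned on the Guttman space Ω^G = {(1,1),(1,0),(0,0)}. Then the coordinate projections Y^{(1)}, Y^{(2)} under μ satisfy the conditional Rasch models μ(Y^{(2)} = 1 | Y^{(1)} = 1) = F(θ − δ_2) and μ(Y^{(1)} = 1 | Y^{(2)} = 0) = F(θ − δ_1). -/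
open scoped Classical

/-- The product (independent Bernoulli) probability mass function on `{0,1}²`
with success probabilities `F(θ - δ₁)` and `F(θ - δ₂)`. -/
noncomputable def prodBer2 (θ δ₁ δ₂ : ℝ) (y : Bool × Bool) : ℝ :=
  (if y.1 then logistic (θ - δ₁) else 1 - logistic (θ - δ₁)) *
    (if y.2 then logistic (θ - δ₂) else 1 - logistic (θ - δ₂))

/-- The Guttman space `Ω^G = {(1,1), (1,0), (0,0)} ⊆ {0,1}²`. -/
def guttman2 : Finset (Bool × Bool) := {(true, true), (true, false), (false, false)}

/-- Proposition 4.2: for `μ` the product Bernoulli measure with success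
probabilities `F(θ - δ₁)`, `F(θ - δ₂)` conditioned on the Guttman space,
`μ(Y⁽²⁾ = 1 | Y⁽¹⁾ = 1) = F(θ - δ₂)` and `μ(Y⁽¹⁾ = 1 | Y⁽²⁾ = 0) = F(θ - δ₁)`. -/
theorem conditional_rasch_in_conditioned_guttman_two_items
    (θ δ₁ δ₂ : ℝ) (μ : Bool × Bool → ℝ)
    (hμ : ∀ y, μ y = (if y ∈ guttman2 then prodBer2 θ δ₁ δ₂ y else 0) /
        ∑ z ∈ guttman2, prodBer2 θ δ₁ δ₂ z) :
    (∑ y ∈ Finset.univ.filter (fun y : Bool × Bool => y.2 = true ∧ y.1 = true), μ y) /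
        (∑ y ∈ Finset.univ.filter (fun y : Bool × Bool => y.1 = true), μ y)
      = logistic (θ - δ₂) ∧
    (∑ y ∈ Finset.univ.filter (fun y : Bool × Bool => y.1 = true ∧ y.2 = false), μ y) /
        (∑ y ∈ Finset.univ.filter (fun y : Bool × Bool => y.2 = false), μ y)
      = logistic (θ - δ₁) := by
  have p : ∀ x, 0 < logistic x := fun x => by unfold logistic; positivity
  have q : ∀ x, 0 < 1 - logistic x := fun x => by
    have h : 1 - logistic x = 1 / (1 + Real.exp x) := by
      unfold logistic
      have : 1 + Real.exp x ≠ 0 := by positivity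
      field_simp
      ring
    rw [h]; positivity
  have hZ : 0 < ∑ z ∈ guttman2, prodBer2 θ δ₁ δ₂ z := by
    apply Finset.sum_pos
    · rintro ⟨a, b⟩ _
      cases a <;> cases b <;> simp only [prodBer2] <;> simp [p, q, mul_pos]
    · exact ⟨(true, true), by simp [guttman2]⟩
  generalize (∑ z ∈ guttman2, prodBer2 θ δ₁ δ₂ z) = Z at hμ hZ
  have h11 : μ (true, true) = logistic (θ - δ₁) * logistic (θ - δ₂) / Z := by
    rw [hμ]; simp [guttman2, prodBer2]
  have h10 : μ (true, false) = logistic (θ - δ₁) * (1 - logistic (θ - δ₂)) / Z := by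
    rw [hμ]; simp [guttman2, prodBer2]
  have h00 : μ (false, false) = (1 - logistic (θ - δ₁)) * (1 - logistic (θ - δ₂)) / Z := by
    rw [hμ]; simp [guttman2, prodBer2]
  have p1 := (p (θ - δ₁)).ne'
  have q2 := (q (θ - δ₂)).ne'
  have hZ' := hZ.ne'
  simp only [Finset.sum_filter, Fintype.sum_prod_type, Fintype.sum_bool]
  simp only [h11, h10, h00, and_true, and_false, and_self, if_true, if_false,
    Bool.false_eq_true, reduceCtorEq, add_zero, zero_add]
  generalize logistic (θ - δ₁) = a at *
  generalize logistic (θ - δ₂) = b at *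
  constructor
  · have : a * b / Z + a * (1 - b) / Z = a / Z := by ring
    rw [this]; field_simp
  · have : a * (1 - b) / Z + (1 - a) * (1 - b) / Z = (1 - b) / Z := by ring
    rw [this]; field_simp
end

section
/- Let k = 2, let F be the logistic function, θ, δ_1, δ_2 ∈ ℝ. Let μ̃ be the product measure on {0,1}² with independent Bernoulli coordinates of success probabilities F(θ − δ_1) and F(θ − δ_2), and let μ be μ̃ conditioned on the Guttman space Ω^G = {(1,1),(1,0),(0,0)}. Then the marginal odds of the coordinates under μ satisfy μ(Y^{(1)} = 1)/μ(Y^{(1)} = 0) = exp(θ − δ_1) / (1 − F(θ − δ_2)) and μ(Y^{(2)} = 1)/μ(Y^{(2)} = 0) = F(θ − δ_1) · exp(θ − δ_2). In particular, the marginals of Y^{(1)} and Y^{(2)} under μ do not follow the binary Rasch models with parameters (θ, δ_1) and (θ, δ_2). -/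
open scoped Classical

/-- for `μ` the product Bernoulli measure with success probabilities
`F(θ - δ₁)`, `F(θ - δ₂)` conditioned on the Guttman space, the marginal odds are
`μ(Y⁽¹⁾=1)/μ(Y⁽¹⁾=0) = exp(θ-δ₁)/(1 - F(θ-δ₂))` and
`μ(Y⁽²⁾=1)/μ(Y⁽²⁾=0) = F(θ-δ₁)·exp(θ-δ₂)`; in particular the marginals do not
follow the binary Rasch models with parameters `(θ, δ₁)` and `(θ, δ₂)`. -/
theorem marginal_odds_in_conditioned_guttman_two_items
    (θ δ₁ δ₂ : ℝ) (μ : Bool × Bool → ℝ)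
    (hμ : ∀ y, μ y = (if y ∈ guttman2 then prodBer2 θ δ₁ δ₂ y else 0) /
        ∑ z ∈ guttman2, prodBer2 θ δ₁ δ₂ z) :
    (∑ y ∈ Finset.univ.filter (fun y : Bool × Bool => y.1 = true), μ y) /
        (∑ y ∈ Finset.univ.filter (fun y : Bool × Bool => y.1 = false), μ y)
      = Real.exp (θ - δ₁) / (1 - logistic (θ - δ₂)) ∧
    (∑ y ∈ Finset.univ.filter (fun y : Bool × Bool => y.2 = true), μ y) /
        (∑ y ∈ Finset.univ.filter (fun y : Bool × Bool => y.2 = false), μ y)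
      = logistic (θ - δ₁) * Real.exp (θ - δ₂) ∧
    (∑ y ∈ Finset.univ.filter (fun y : Bool × Bool => y.1 = true), μ y)
      ≠ logistic (θ - δ₁) ∧
    (∑ y ∈ Finset.univ.filter (fun y : Bool × Bool => y.2 = true), μ y)
      ≠ logistic (θ - δ₂) := by
  have ha : 0 < Real.exp (θ - δ₁) := Real.exp_pos _
  have hb : 0 < Real.exp (θ - δ₂) := Real.exp_pos _
  have hZ : ∑ z ∈ guttman2, prodBer2 θ δ₁ δ₂ z
      = prodBer2 θ δ₁ δ₂ (true, true) + (prodBer2 θ δ₁ δ₂ (true, false)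
        + prodBer2 θ δ₁ δ₂ (false, false)) := by
    simp [guttman2]
  have f1 : (Finset.univ.filter (fun y : Bool × Bool => y.1 = true))
      = {(true, true), (true, false)} := by ext ⟨x, y⟩; cases x <;> cases y <;> simp
  have f2 : (Finset.univ.filter (fun y : Bool × Bool => y.1 = false))
      = {(false, true), (false, false)} := by ext ⟨x, y⟩; cases x <;> cases y <;> simp
  have f3 : (Finset.univ.filter (fun y : Bool × Bool => y.2 = true))
      = {(true, true), (false, true)} := by ext ⟨x, y⟩; cases x <;> cases y <;> simp
  have f4 : (Finset.univ.filter (fun y : Bool × Bool => y.2 = false))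
      = {(true, false), (false, false)} := by ext ⟨x, y⟩; cases x <;> cases y <;> simp
  rw [hZ] at hμ
  have h1 := hμ (true, true)
  have h2 := hμ (true, false)
  have h3 := hμ (false, true)
  have h4 := hμ (false, false)
  simp only [guttman2, prodBer2, logistic] at h1 h2 h3 h4
  simp at h1 h2 h3 h4
  simp only [f1, f2, f3, f4, logistic]
  rw [Finset.sum_pair (by simp), Finset.sum_pair (by simp), Finset.sum_pair (by simp),
    Finset.sum_pair (by simp)]
  generalize Real.exp (θ - δ₁) = a at *
  generalize Real.exp (θ - δ₂) = b at *
  have hD : 0 < 1 + a + a * b := by positivity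
  have ea : 1 - a / (1 + a) = 1 / (1 + a) := by field_simp; ring
  have eb : 1 - b / (1 + b) = 1 / (1 + b) := by field_simp; ring
  have eZ : a / (1 + a) * (b / (1 + b)) + (a / (1 + a) * (1 / (1 + b))
      + 1 / (1 + a) * (1 / (1 + b))) = (1 + a + a * b) / ((1 + a) * (1 + b)) := by
    field_simp; ring
  rw [ea, eb, eZ] at h1 h2 h4
  have g1 : μ (true, true) = a * b / (1 + a + a * b) := by rw [h1]; field_simp
  have g2 : μ (true, false) = a / (1 + a + a * b) := by rw [h2]; field_simp
  have g4 : μ (false, false) = 1 / (1 + a + a * b) := by rw [h4]; field_simp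
  rw [g1, g2, h3, g4, eb]
  refine ⟨?_, ?_, ?_, ?_⟩
  · field_simp
    ring
  · field_simp
    ring
  · intro h
    rw [← add_div, div_eq_div_iff (by positivity) (by positivity)] at h
    nlinarith [mul_pos ha hb]
  · intro h
    rw [add_zero, div_eq_div_iff (by positivity) (by positivity)] at h
    nlinarith [mul_pos ha hb]
end

section
/- (Proposition 4.3.) Let F be the logistic function, θ ∈ ℝ, δ_1,…,δ_k ∈ ℝ. Let μ̃ be the product probability measure on {0,1}^k under which the coordinates are independent Bernoulli variables with success probabilities F(θ − δ_r), r = 1,…,k, and let μ be μ̃ conditioned on the Guttman space Ω^G. Then for every r = 1,…,k, μ(Y^{(r)} = 1 | Y^{(r−1)} = 1, Y^{(r+1)} = 0) = F(θ − δ_r), where Y^{(1)},…,Y^{(k)} are the coordinate projections and the conventions Y^{(0)} ≡ 1 and Y^{(k+1)} ≡ 0 are used (so for r = k the condition is Y^{(k−1)} = 1 and for r = 1 it is Y^{(2)} = 0). -/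
open scoped Classical

/-- The product (independent Bernoulli) probability mass function on `{0,1}^k`
with success probabilities `F(θ - δ r)`, `r = 1,…,k` (coordinate `i` is `r = i+1`). -/
noncomputable def prodBer (k : ℕ) (θ : ℝ) (δ : ℕ → ℝ) (y : Fin k → Bool) : ℝ :=
  ∏ i : Fin k,
    if y i then logistic (θ - δ ((i : ℕ) + 1)) else 1 - logistic (θ - δ ((i : ℕ) + 1))

lemma logistic_pos_aux (x : ℝ) : 0 < logistic x := by
  unfold logistic; positivity

lemma logistic_lt_aux (x : ℝ) : 0 < 1 - logistic x := by
  unfold logistic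
  have h := Real.exp_pos x
  rw [sub_pos, div_lt_one (by positivity)]
  linarith

lemma prodBer_pos_aux (k : ℕ) (θ : ℝ) (δ : ℕ → ℝ) (y : Fin k → Bool) :
    0 < prodBer k θ δ y := by
  unfold prodBer
  apply Finset.prod_pos
  intro i _
  split_ifs
  · exact logistic_pos_aux _
  · exact logistic_lt_aux _

/-- The Guttman vector with `m` leading ones. -/
def gvec (k m : ℕ) : Fin k → Bool := fun i => decide ((i : ℕ) < m)

lemma gvec_guttman (k m : ℕ) : IsGuttman (gvec k m) := by
  intro i j hij h
  simp only [gvec, decide_eq_true_eq] at h ⊢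
  have : (i : ℕ) ≤ j := hij
  omega

lemma coordExt_gvec (k m r : ℕ) (hm : m ≤ k) : coordExt (gvec k m) r = decide (r ≤ m) := by
  unfold coordExt gvec
  split_ifs with h0 h
  · simp [h0]
  · simp only [decide_eq_decide]; omega
  · symm; simp only [decide_eq_false_iff_not]; omega

/-- A Guttman vector with `Y⁽ᵐ⁾ = 1`, `Y⁽ᵐ⁺¹⁾ = 0` is `gvec k m`. -/
lemma eq_gvec_aux {k : ℕ} (y : Fin k → Bool) (hy : IsGuttman y) (m : ℕ)
    (h1 : coordExt y m = true) (h2 : coordExt y (m + 1) = false) : y = gvec k m := by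
  funext i
  by_cases hi : (i : ℕ) < m
  · have : y i = true := by
      unfold coordExt at h1
      split_ifs at h1 with h0 h
      · omega
      · refine hy i _ ?_ h1
        rw [Fin.le_def]
        simp only
        omega
    simp [gvec, hi, this]
  · have : y i = false := by
      by_contra hc
      have hc' : y i = true := by simpa using hc
      unfold coordExt at h2
      have hik := i.2
      rw [dif_neg (by omega), dif_pos (by omega)] at h2
      have := hy ⟨m + 1 - 1, by omega⟩ i (by rw [Fin.le_def]; simp only; omega) hc'
      rw [this] at h2
      exact absurd h2 (by simp)
    simp [gvec, hi, this]

lemma prodBer_gvec_ratio (k : ℕ) (θ : ℝ) (δ : ℕ → ℝ) (m : ℕ) (hm : m < k) :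
    (1 - logistic (θ - δ (m + 1))) * prodBer k θ δ (gvec k (m + 1)) =
      logistic (θ - δ (m + 1)) * prodBer k θ δ (gvec k m) := by
  unfold prodBer
  rw [← Finset.mul_prod_erase Finset.univ _ (Finset.mem_univ (⟨m, hm⟩ : Fin k)),
    ← Finset.mul_prod_erase Finset.univ
      (fun i : Fin k => if gvec k m i then logistic (θ - δ ((i : ℕ) + 1))
        else 1 - logistic (θ - δ ((i : ℕ) + 1))) (Finset.mem_univ (⟨m, hm⟩ : Fin k))]
  have : ∀ i ∈ Finset.univ.erase (⟨m, hm⟩ : Fin k), gvec k (m + 1) i = gvec k m i := by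
    intro i hi
    have hne : (i : ℕ) ≠ m := by
      intro h
      exact (Finset.ne_of_mem_erase hi) (Fin.ext h)
    simp only [gvec, decide_eq_decide]
    omega
  rw [Finset.prod_congr rfl (fun i hi => by rw [this i hi])]
  have e1 : gvec k (m + 1) ⟨m, hm⟩ = true := by simp [gvec]
  have e2 : gvec k m ⟨m, hm⟩ = false := by simp [gvec]
  rw [e1, e2]
  simp only [if_true, Bool.false_eq_true, if_false]
  ring

/-- Proposition 4.3: for `μ` the product Bernoulli measure with
success probabilities `F(θ - δ r)` conditioned on the Guttman space, one has
`μ(Y⁽ʳ⁾ = 1 | Y⁽ʳ⁻¹⁾ = 1, Y⁽ʳ⁺¹⁾ = 0) = F(θ - δ r)` for every `r = 1,…,k`,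
with the conventions `Y⁽⁰⁾ ≡ 1` and `Y⁽ᵏ⁺¹⁾ ≡ 0`. -/
theorem conditional_rasch_in_conditioned_guttman
    (k : ℕ) (θ : ℝ) (δ : ℕ → ℝ) (μ : (Fin k → Bool) → ℝ)
    (hμ : ∀ y, μ y = (if IsGuttman y then prodBer k θ δ y else 0) /
        ∑ z ∈ Finset.univ.filter (fun z : Fin k → Bool => IsGuttman z), prodBer k θ δ z) :
    ∀ r ∈ Finset.Icc 1 k,
      (∑ y ∈ Finset.univ.filter
          (fun y : Fin k → Bool =>
            coordExt y r = true ∧ coordExt y (r - 1) = true ∧ coordExt y (r + 1) = false),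
          μ y) /
        (∑ y ∈ Finset.univ.filter
          (fun y : Fin k → Bool =>
            coordExt y (r - 1) = true ∧ coordExt y (r + 1) = false), μ y)
        = logistic (θ - δ r) := by
  intro r hr
  rw [Finset.mem_Icc] at hr
  obtain ⟨m, rfl⟩ : ∃ m, r = m + 1 := ⟨r - 1, by omega⟩
  have hm : m < k := by omega
  simp only [Nat.add_sub_cancel]
  have hμ0 : ∀ y, ¬ IsGuttman y → μ y = 0 := by
    intro y hy
    rw [hμ, if_neg hy, zero_div]
  have hne : gvec k (m + 1) ≠ gvec k m := by
    intro h
    have := congrFun h ⟨m, hm⟩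
    simp [gvec] at this
  have hnum : (∑ y ∈ Finset.univ.filter
          (fun y : Fin k → Bool =>
            coordExt y (m + 1) = true ∧ coordExt y m = true ∧ coordExt y (m + 1 + 1) = false),
          μ y) = μ (gvec k (m + 1)) := by
    rw [← Finset.sum_singleton μ (gvec k (m + 1))]
    symm
    apply Finset.sum_subset
    · intro y hy
      rw [Finset.mem_singleton] at hy
      subst hy
      simp [coordExt_gvec k (m + 1) _ (by omega)]
    · intro y hy hy'
      apply hμ0
      intro hG
      rw [Finset.mem_filter] at hy
      exact hy' (Finset.mem_singleton.2 (eq_gvec_aux y hG _ hy.2.1 hy.2.2.2))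
  have hden : (∑ y ∈ Finset.univ.filter
          (fun y : Fin k → Bool =>
            coordExt y m = true ∧ coordExt y (m + 1 + 1) = false),
          μ y) = μ (gvec k (m + 1)) + μ (gvec k m) := by
    rw [← Finset.sum_pair hne]
    symm
    apply Finset.sum_subset
    · intro y hy
      rw [Finset.mem_insert, Finset.mem_singleton] at hy
      rcases hy with rfl | rfl
      · simp [coordExt_gvec k (m + 1) _ (by omega)]
      · simp [coordExt_gvec k m _ (by omega)]
    · intro y hy hy'
      apply hμ0
      intro hG
      rw [Finset.mem_filter] at hy
      apply hy'
      rw [Finset.mem_insert, Finset.mem_singleton]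
      by_cases hc : coordExt y (m + 1) = true
      · exact Or.inl (eq_gvec_aux y hG _ hc hy.2.2)
      · exact Or.inr (eq_gvec_aux y hG _ hy.2.1 (by simpa using hc))
  rw [hnum, hden, hμ, hμ, if_pos (gvec_guttman _ _), if_pos (gvec_guttman _ _)]
  have hS : 0 < ∑ z ∈ Finset.univ.filter (fun z : Fin k → Bool => IsGuttman z),
      prodBer k θ δ z := by
    apply Finset.sum_pos
    · intro z _
      exact prodBer_pos_aux _ _ _ _
    · exact ⟨gvec k m, Finset.mem_filter.2 ⟨Finset.mem_univ _, gvec_guttman _ _⟩⟩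
  have hA := prodBer_pos_aux k θ δ (gvec k (m + 1))
  have hB := prodBer_pos_aux k θ δ (gvec k m)
  have hR := prodBer_gvec_ratio k θ δ m hm
  rw [← add_div, div_div_div_cancel_right₀ hS.ne', div_eq_iff (by positivity)]
  linarith
end

section
/- (Proposition 4.4.) Let F be the logistic function and let p be a probability mass function on {0,1,…,k} following the partial credit model with parameters θ, δ_1,…,δ_k. Let G : {0,…,k} → {0,1}^k be the Guttman embedding G(y) = (1{y ≥ 1},…,1{y ≥ k}), and let μ be the pushforward of p under G (a measure concentrated on the Guttman space). Then, with the conventions G_0 ≡ 1 and G_{k+1} ≡ 0, for every r = 1,…,k the conditioning event has positive probability and μ(G_r = 1 | G_{r−1} = 1, G_{r+1} = 0) = F(θ − δ_r). -/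
open scoped Classical

/-- The probability mass function of the partial credit model (PCM) with person
parameter `θ` and item parameters `δ 1, …, δ k`. -/
noncomputable def pcmPMF (k : ℕ) (θ : ℝ) (δ : ℕ → ℝ) (r : ℕ) : ℝ :=
  Real.exp (∑ l ∈ Finset.Icc 1 r, (θ - δ l)) /
    ∑ s ∈ Finset.range (k + 1), Real.exp (∑ l ∈ Finset.Icc 1 s, (θ - δ l))

/-- The `r`-th coordinate of the Guttman embedding `G(y) = (1{y ≥ 1},…,1{y ≥ k})`
of `y ∈ {0,…,k}`, with the conventions `G_0 ≡ 1` and `G_r ≡ 0` for `r > k`. -/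
def gcoord (k y r : ℕ) : Bool :=
  if 1 ≤ r ∧ r ≤ k then decide (r ≤ y) else decide (r = 0)

/-- Proposition 4.4: if `p` follows the PCM and `μ` is the pushforward
of `p` under the Guttman embedding `G`, then for each `r = 1,…,k` the conditioning
event `{G_{r-1} = 1, G_{r+1} = 0}` has positive probability and
`μ(G_r = 1 | G_{r-1} = 1, G_{r+1} = 0) = F(θ - δ r)`. -/
theorem pcm_pushforward_guttman_conditional_rasch
    (k : ℕ) (θ : ℝ) (δ : ℕ → ℝ) (p : ℕ → ℝ)
    (hpcm : ∀ r ≤ k, p r = pcmPMF k θ δ r) :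
    ∀ r ∈ Finset.Icc 1 k,
      0 < (∑ y ∈ (Finset.range (k + 1)).filter
            (fun y => gcoord k y (r - 1) = true ∧ gcoord k y (r + 1) = false), p y) ∧
      (∑ y ∈ (Finset.range (k + 1)).filter
            (fun y => gcoord k y r = true ∧ gcoord k y (r - 1) = true ∧
              gcoord k y (r + 1) = false), p y) /
        (∑ y ∈ (Finset.range (k + 1)).filter
            (fun y => gcoord k y (r - 1) = true ∧ gcoord k y (r + 1) = false), p y)
        = logistic (θ - δ r) := by
  intro r hr
  obtain ⟨h1, hk⟩ := Finset.mem_Icc.mp hr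
  obtain ⟨n, rfl⟩ : ∃ n, r = n + 1 := ⟨r - 1, by omega⟩
  have e1 : (Finset.range (k + 1)).filter
      (fun y => gcoord k y (n + 1 - 1) = true ∧ gcoord k y (n + 1 + 1) = false)
      = {n, n + 1} := by
    ext y
    rw [Finset.mem_filter]
    simp only [Finset.mem_range, Finset.mem_insert, Finset.mem_singleton,
      gcoord]
    split_ifs <;> simp only [decide_eq_true_eq, decide_eq_false_iff_not,
      not_false_eq_true, and_true] <;> omega
  have e2 : (Finset.range (k + 1)).filter
      (fun y => gcoord k y (n + 1) = true ∧ gcoord k y (n + 1 - 1) = true ∧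
        gcoord k y (n + 1 + 1) = false) = {n + 1} := by
    ext y
    rw [Finset.mem_filter]
    simp only [Finset.mem_range, Finset.mem_singleton, gcoord]
    split_ifs <;> simp only [decide_eq_true_eq, decide_eq_false_iff_not,
      not_false_eq_true, and_true] <;> omega
  rw [e1, e2, Finset.sum_singleton, Finset.sum_pair (by omega), hpcm n (by omega),
    hpcm (n + 1) hk]
  unfold pcmPMF logistic
  have hZ : 0 < ∑ s ∈ Finset.range (k + 1), Real.exp (∑ l ∈ Finset.Icc 1 s, (θ - δ l)) :=
    Finset.sum_pos (fun _ _ => Real.exp_pos _) ⟨0, by simp⟩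
  rw [Finset.sum_Icc_succ_top (by omega : 1 ≤ n + 1), Real.exp_add]
  generalize (∑ s ∈ Finset.range (k + 1), Real.exp (∑ l ∈ Finset.Icc 1 s, (θ - δ l))) = Z at *
  have hA := Real.exp_pos (∑ l ∈ Finset.Icc 1 n, (θ - δ l))
  have hB := Real.exp_pos (θ - δ (n + 1))
  generalize Real.exp (∑ l ∈ Finset.Icc 1 n, (θ - δ l)) = A at *
  generalize Real.exp (θ - δ (n + 1)) = B at *
  refine ⟨by positivity, ?_⟩
  have : 1 + B ≠ 0 := by positivity
  have : A / Z + A * B / Z ≠ 0 := by positivity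
  rw [div_eq_div_iff this (by positivity)]
  field_simp
end

section
/- If a probability mass function p on {0,1,…,k} follows the partial credit model with person parameter θ and item parameters δ_1,…,δ_k, then the reversed probability mass function q defined by q(r) = p(k − r) follows the partial credit model with person parameter −θ and item parameters δ'_1,…,δ'_k given by δ'_l = −δ_{k−l+1}. In particular, the partial credit model is invariant under the reverse permutation of the response categories. -/
open scoped Classical

theorem pcm_aux (k : ℕ) (θ : ℝ) (δ : ℕ → ℝ) (r : ℕ) (hr : r ≤ k) :
    ∑ l ∈ Finset.Icc 1 r, (-θ - -δ (k - l + 1)) =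
      ∑ l ∈ Finset.Icc 1 (k - r), (θ - δ l) - ∑ l ∈ Finset.Icc 1 k, (θ - δ l) := by
  induction r with
  | zero => simp
  | succ n ih =>
    rw [Finset.sum_Icc_succ_top (by omega), ih (by omega)]
    obtain ⟨m, rfl⟩ : ∃ m, k = m + (n + 1) := ⟨k - (n + 1), by omega⟩
    have h1 : m + (n + 1) - n = m + 1 := by omega
    have h2 : m + (n + 1) - (n + 1) = m := by omega
    rw [h1, h2, Finset.sum_Icc_succ_top (by omega)]
    ring

/-- if `p` follows the PCM with parameters `θ, δ 1, …, δ k`, then the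
reversed pmf `q r = p (k - r)` follows the PCM with person parameter `-θ` and item
parameters `δ' l = -δ (k - l + 1)`; i.e., the PCM is invariant under the reverse
permutation of the response categories. -/
theorem pcm_reverse_permutation_invariance
    (k : ℕ) (θ : ℝ) (δ : ℕ → ℝ) (p : ℕ → ℝ)
    (hpcm : ∀ r ≤ k, p r = pcmPMF k θ δ r) :
    ∀ r ≤ k, p (k - r) = pcmPMF k (-θ) (fun l => -δ (k - l + 1)) r := by
  intro r hr
  rw [hpcm _ (Nat.sub_le k r)]
  unfold pcmPMF
  have hden : ∑ s ∈ Finset.range (k + 1),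
      Real.exp (∑ l ∈ Finset.Icc 1 s, (-θ - -δ (k - l + 1))) =
      (∑ s ∈ Finset.range (k + 1), Real.exp (∑ l ∈ Finset.Icc 1 s, (θ - δ l))) /
        Real.exp (∑ l ∈ Finset.Icc 1 k, (θ - δ l)) := by
    rw [Finset.sum_div, ← Finset.sum_range_reflect (fun s =>
      Real.exp (∑ l ∈ Finset.Icc 1 s, (θ - δ l)) /
        Real.exp (∑ l ∈ Finset.Icc 1 k, (θ - δ l)))]
    apply Finset.sum_congr rfl
    intro s hs
    have hs' : s ≤ k := by
      have := Finset.mem_range.mp hs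
      omega
    rw [pcm_aux k θ δ _ (by omega), Real.exp_sub]
    rw [show k + 1 - 1 - s = k - s by omega]
  beta_reduce
  rw [hden, pcm_aux k θ δ r hr, Real.exp_sub]
  exact (div_div_div_cancel_right₀ (Real.exp_ne_zero _) _ _).symm
end
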